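/- Convergence of the Frank–Wolfe algorithm for FROT: let n, m, L ≥ 1, η > 0, δ ≥ 0, and C_1,…,C_L ∈ ℝ^{n×m}. Let a ∈ Σ^n, b ∈ Σ^m be probability weight vectors and let U(a,b) be the transport polytope. Let Φ : ℝ^L → ℝ^{n×m} be the linear map α ↦ ∑_ℓ α_ℓ C_ℓ with operator norm ‖Φ‖_op (Euclidean norm on ℝ^L, Frobenius norm on ℝ^{n×m}), and set Q = 2‖Φ‖_op²/η. Suppose (Π^{(t)})_{t≥0} is a sequence with Π^{(0)} ∈ U(a,b) such that for each t ≥ 0, with γ_t = 2/(t+2), there exists Π̂^{(t)} ∈ U(a,b) satisfying ⟨Π̂^{(t)}, M_{Π^{(t)}}⟩ ≤ ⟨S, M_{Π^{(t)}}⟩ + δ γ_t Q / 2 for all S ∈ U(a,b), and Π^{(t+1)} = (1−γ_t) Π^{(t)} + γ_t Π̂^{(t)}. Then for every t ≥ 1 and every Π* ∈ U(a,b), G_η(Π^{(t)}) − G_η(Π*) ≤ (4 ‖Φ‖_op² / (η (t+2))) (1+δ). -/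

import Mathlib

open scoped BigOperators

/-- The transport polytope `U(a,b)` of couplings between weight vectors `a` and `b`. -/
def transportPolytope {n m : ℕ} (a : Fin n → ℝ) (b : Fin m → ℝ) :
    Set (Fin n → Fin m → ℝ) :=
  {P | (∀ i j, 0 ≤ P i j) ∧ (∀ i, ∑ j, P i j = a i) ∧ (∀ j, ∑ i, P i j = b j)}

/-!
Write `G = η · LSE(⟨·, C₁⟩/η, …, ⟨·, C_L⟩/η)`. Moving from `z` to `z + u` changes log-sum-exp by
`log 𝔼[exp u]`, where `𝔼` averages over the softmax weights of `z`. Jensen's inequality bounds this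
below by `𝔼[u]` (convexity) and Hoeffding's lemma bounds it above by `𝔼[u] + c²/2` if `|u| ≤ c`
(smoothness). Two couplings are at Frobenius distance at most `√2` and each `C ℓ` is the image under
`Φ` of a unit vector, so by Cauchy–Schwarz `G` has curvature constant at most `Q = 2‖Φ‖²/η` on the
polytope. The optimality gap `h` of the Frank–Wolfe iterates then satisfies
`h (t + 1) ≤ (1 - γ t) h t + (γ t)² Q (1 + δ) / 2`, and this recursion yields the `O(1/t)` rate.
-/

section FrankWolfe

/-- The step size `γ t` of the Frank–Wolfe method with open-loop steps. -/
noncomputable def frankWolfeStep (t : ℕ) : ℝ := 2 / ((t : ℝ) + 2)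

theorem frankWolfeStep_nonneg (t : ℕ) : 0 ≤ frankWolfeStep t := by
  unfold frankWolfeStep
  positivity

theorem frankWolfeStep_le_one (t : ℕ) : frankWolfeStep t ≤ 1 := by
  rw [frankWolfeStep, div_le_one (by positivity)]
  linarith [t.cast_nonneg (α := ℝ)]

theorem le_of_frankWolfeStep_recursion {h : ℕ → ℝ} {K : ℝ} (hK : 0 ≤ K)
    (hrec : ∀ t, h (t + 1) ≤ (1 - frankWolfeStep t) * h t + frankWolfeStep t ^ 2 * K)
    {t : ℕ} (ht : 1 ≤ t) : h t ≤ 4 * K / ((t : ℝ) + 2) := by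
  induction t, ht using Nat.le_induction with
  | base =>
    have h_one := hrec 0
    norm_num [frankWolfeStep] at h_one ⊢
    linarith
  | succ t ht ih =>
    have step_le := sub_nonneg.2 (frankWolfeStep_le_one t)
    calc h (t + 1) ≤ (1 - frankWolfeStep t) * h t + frankWolfeStep t ^ 2 * K := hrec t
      _ ≤ (1 - frankWolfeStep t) * (4 * K / ((t : ℝ) + 2)) + frankWolfeStep t ^ 2 * K := by gcongr
      _ = 4 * K * (((t : ℝ) + 1) / ((t : ℝ) + 2) ^ 2) := by
        rw [frankWolfeStep]
        field
      _ ≤ 4 * K * (1 / (((t + 1 : ℕ) : ℝ) + 2)) := by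
        gcongr ?_ * ?_
        rw [div_le_div_iff₀ (by positivity) (by positivity)]
        push_cast
        nlinarith
      _ = 4 * K / (((t + 1 : ℕ) : ℝ) + 2) := mul_one_div _ _

variable {E : Type*} [AddCommGroup E] [Module ℝ E]

/-- `Q` bounds the curvature constant on `K` of the function `f` with derivative `g x` at `x`: how
far `f` can rise above its linearization along a Frank–Wolfe step. -/
def HasCurvatureBound (K : Set E) (f : E → ℝ) (g : E → Module.Dual ℝ E) (Q : ℝ) : Prop :=
  ∀ x ∈ K, ∀ s ∈ K, ∀ γ ∈ Set.Icc (0 : ℝ) 1,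
    f ((1 - γ) • x + γ • s) ≤ f x + γ * g x (s - x) + γ ^ 2 * Q / 2

theorem HasCurvatureBound.nonneg {K : Set E} {f : E → ℝ} {g : E → Module.Dual ℝ E} {Q : ℝ}
    (hf : HasCurvatureBound K f g Q) (hK : K.Nonempty) : 0 ≤ Q := by
  obtain ⟨x, hx⟩ := hK
  have h_step := hf x hx x hx 1 (by simp)
  simp only [sub_self, map_zero, zero_smul, one_smul, zero_add] at h_step
  linarith

/-- The run `x` of the inexact Frank–Wolfe method on `K` with derivative oracle `g`: at time `t` the
linear subproblem is solved by `s t` up to the error `δ γ_t Q / 2`, with `Q` playing the role of a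
curvature constant. -/
structure IsFrankWolfeSequence (K : Set E) (g : E → Module.Dual ℝ E) (Q δ : ℝ) (x s : ℕ → E) :
    Prop where
  init_mem : x 0 ∈ K
  oracle_mem : ∀ t, s t ∈ K
  oracle_le : ∀ t, ∀ y ∈ K, g (x t) (s t) ≤ g (x t) y + δ * frankWolfeStep t * Q / 2
  step : ∀ t, x (t + 1) = (1 - frankWolfeStep t) • x t + frankWolfeStep t • s t

namespace IsFrankWolfeSequence

variable {K : Set E} {f : E → ℝ} {g : E → Module.Dual ℝ E} {Q δ : ℝ} {x s : ℕ → E}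

theorem mem (hx : IsFrankWolfeSequence K g Q δ x s) (hK : Convex ℝ K) (t : ℕ) : x t ∈ K := by
  induction t with
  | zero => exact hx.init_mem
  | succ t ih =>
    rw [hx.step t]
    exact hK ih (hx.oracle_mem t) (sub_nonneg.2 (frankWolfeStep_le_one t))
      (frankWolfeStep_nonneg t) (sub_add_cancel _ _)

theorem oracle_error_nonneg (hx : IsFrankWolfeSequence K g Q δ x s) : 0 ≤ δ * Q := by
  have h_error := hx.oracle_le 0 (s 0) (hx.oracle_mem 0)
  norm_num [frankWolfeStep] at h_error
  linarith

theorem sub_succ_le (hx : IsFrankWolfeSequence K g Q δ x s) (hK : Convex ℝ K)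
    (hconv : ∀ x ∈ K, ∀ y ∈ K, f x + g x (y - x) ≤ f y) (hcurv : HasCurvatureBound K f g Q)
    {y : E} (hy : y ∈ K) (t : ℕ) :
    f (x (t + 1)) - f y ≤
      (1 - frankWolfeStep t) * (f (x t) - f y) + frankWolfeStep t ^ 2 * (Q / 2 * (1 + δ)) := by
  have hγ := frankWolfeStep_nonneg t
  have hdescent := hcurv (x t) (hx.mem hK t) (s t) (hx.oracle_mem t) (frankWolfeStep t)
    ⟨hγ, frankWolfeStep_le_one t⟩
  have horacle : g (x t) (s t - x t) ≤ f y - f (x t) + δ * frankWolfeStep t * Q / 2 := by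
    have hsub := hconv (x t) (hx.mem hK t) y hy
    have hmin := hx.oracle_le t y hy
    rw [map_sub] at hsub ⊢
    linarith
  rw [hx.step t]
  linarith [mul_le_mul_of_nonneg_left horacle hγ]

theorem sub_le (hx : IsFrankWolfeSequence K g Q δ x s) (hK : Convex ℝ K)
    (hconv : ∀ x ∈ K, ∀ y ∈ K, f x + g x (y - x) ≤ f y) (hcurv : HasCurvatureBound K f g Q)
    {y : E} (hy : y ∈ K) {t : ℕ} (ht : 1 ≤ t) :
    f (x t) - f y ≤ 2 * Q / ((t : ℝ) + 2) * (1 + δ) := by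
  have hQδ : 0 ≤ Q / 2 * (1 + δ) := by
    linarith [hcurv.nonneg ⟨y, hy⟩, hx.oracle_error_nonneg]
  calc f (x t) - f y ≤ 4 * (Q / 2 * (1 + δ)) / ((t : ℝ) + 2) :=
        le_of_frankWolfeStep_recursion (h := fun t => f (x t) - f y) hQδ
          (hx.sub_succ_le hK hconv hcurv hy) ht
    _ = 2 * Q / ((t : ℝ) + 2) * (1 + δ) := by ring

end IsFrankWolfeSequence

end FrankWolfe

section Hoeffding

open MeasureTheory ProbabilityTheory

theorem integral_exp_le_of_mem_Icc {Ω : Type*} [MeasurableSpace Ω] {μ : Measure Ω}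
    [IsProbabilityMeasure μ] {X : Ω → ℝ} {a b : ℝ} (hm : AEMeasurable X μ)
    (hX : ∀ᵐ ω ∂μ, X ω ∈ Set.Icc a b) :
    ∫ ω, Real.exp (X ω) ∂μ ≤ Real.exp (∫ ω, X ω ∂μ + (b - a) ^ 2 / 8) := by
  have hmgf := (hasSubgaussianMGF_of_mem_Icc hm hX).mgf_le 1
  calc ∫ ω, Real.exp (X ω) ∂μ
      = Real.exp (∫ ω, X ω ∂μ) * mgf (fun ω => X ω - ∫ ω', X ω' ∂μ) μ 1 := by
        simp_rw [mgf, ← integral_const_mul, ← Real.exp_add, one_mul, add_sub_cancel]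
    _ ≤ Real.exp (∫ ω, X ω ∂μ) * Real.exp ((b - a) ^ 2 / 8) := by
        gcongr
        refine hmgf.trans_eq (congrArg Real.exp ?_)
        push_cast
        rw [div_pow, Real.norm_eq_abs, sq_abs]
        ring
    _ = Real.exp (∫ ω, X ω ∂μ + (b - a) ^ 2 / 8) := (Real.exp_add _ _).symm

theorem sum_mul_exp_le_of_mem_Icc {ι : Type*} [Fintype ι] {p : ι → ℝ} (hp : p ∈ stdSimplex ℝ ι)
    {u : ι → ℝ} {a b : ℝ} (hu : ∀ l, u l ∈ Set.Icc a b) :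
    ∑ l, p l * Real.exp (u l) ≤ Real.exp (∑ l, p l * u l + (b - a) ^ 2 / 8) := by
  let _ : MeasurableSpace ι := ⊤
  let q : PMF ι := PMF.ofFintype (fun l => ENNReal.ofReal (p l)) (by
    rw [← ENNReal.ofReal_sum_of_nonneg fun l _ => hp.1 l, hp.2, ENNReal.ofReal_one])
  have integral_q (f : ι → ℝ) : ∫ l, f l ∂q.toMeasure = ∑ l, p l * f l := by
    simp [PMF.integral_eq_sum, q, hp.1]
  simpa only [integral_q] using integral_exp_le_of_mem_Icc (μ := q.toMeasure)
    measurable_from_top.aemeasurable (ae_of_all _ hu)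

end Hoeffding

section LogSumExp

variable {ι : Type*} [Fintype ι]

/-- The log-sum-exp function, a smooth convex proxy for the maximum. -/
noncomputable def logSumExp (z : ι → ℝ) : ℝ := Real.log (∑ l, Real.exp (z l))

/-- The softmax weights of `z`, which form the gradient of `logSumExp` at `z`. -/
noncomputable def softmax (z : ι → ℝ) (l : ι) : ℝ := Real.exp (z l) / ∑ k, Real.exp (z k)

variable [Nonempty ι]

theorem sum_exp_pos (z : ι → ℝ) : 0 < ∑ l, Real.exp (z l) :=
  Finset.sum_pos (fun _ _ => Real.exp_pos _) Finset.univ_nonempty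

theorem softmax_pos (z : ι → ℝ) (l : ι) : 0 < softmax z l :=
  div_pos (Real.exp_pos _) (sum_exp_pos z)

theorem softmax_mem_stdSimplex (z : ι → ℝ) : softmax z ∈ stdSimplex ℝ ι :=
  ⟨fun l => (softmax_pos z l).le, by
    simp only [softmax, ← Finset.sum_div, div_self (sum_exp_pos z).ne']⟩

theorem sum_softmax_mul_exp_pos (z u : ι → ℝ) : 0 < ∑ l, softmax z l * Real.exp (u l) :=
  Finset.sum_pos (fun l _ => mul_pos (softmax_pos z l) (Real.exp_pos _)) Finset.univ_nonempty

theorem logSumExp_add (z u : ι → ℝ) :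
    logSumExp (z + u) = logSumExp z + Real.log (∑ l, softmax z l * Real.exp (u l)) := by
  rw [logSumExp, logSumExp,
    ← Real.log_mul (sum_exp_pos z).ne' (sum_softmax_mul_exp_pos z u).ne', Finset.mul_sum]
  congr! 2 with l
  rw [Pi.add_apply, Real.exp_add, softmax, ← mul_assoc, mul_div_cancel₀ _ (sum_exp_pos z).ne']

theorem logSumExp_add_sum_softmax_mul_le (z u : ι → ℝ) :
    logSumExp z + ∑ l, softmax z l * u l ≤ logSumExp (z + u) := by
  obtain ⟨softmax_nonneg, sum_softmax⟩ := softmax_mem_stdSimplex z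
  rw [logSumExp_add]
  gcongr
  rw [Real.le_log_iff_exp_le (sum_softmax_mul_exp_pos z u)]
  exact convexOn_exp.map_sum_le (fun l _ => softmax_nonneg l) sum_softmax fun _ _ => Set.mem_univ _

theorem logSumExp_add_le (z : ι → ℝ) {u : ι → ℝ} {a b : ℝ} (hu : ∀ l, u l ∈ Set.Icc a b) :
    logSumExp (z + u) ≤ logSumExp z + (∑ l, softmax z l * u l + (b - a) ^ 2 / 8) := by
  rw [logSumExp_add]
  gcongr
  rw [Real.log_le_iff_le_exp (sum_softmax_mul_exp_pos z u)]
  exact sum_mul_exp_le_of_mem_Icc (softmax_mem_stdSimplex z) hu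

end LogSumExp

section SmoothedMax

variable {E ι : Type*} [AddCommGroup E] [Module ℝ E] [Fintype ι]

/-- The smoothing at temperature `η` of the maximum of the linear functionals `φ ℓ`; the objective
`G_η` is the case `φ ℓ = ⟨·, C_ℓ⟩`. -/
noncomputable def smoothedMax (η : ℝ) (φ : ι → Module.Dual ℝ E) (x : E) : ℝ :=
  η * logSumExp fun l => φ l x / η

/-- The derivative of `smoothedMax η φ` at `x`, an average of the functionals `φ ℓ`. -/
noncomputable def smoothedMaxDeriv (η : ℝ) (φ : ι → Module.Dual ℝ E) (x : E) : Module.Dual ℝ E :=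
  ∑ l, softmax (fun k => φ k x / η) l • φ l

theorem smoothedMax_add (η : ℝ) (φ : ι → Module.Dual ℝ E) (x v : E) :
    smoothedMax η φ (x + v) = η * logSumExp ((fun l => φ l x / η) + fun l => φ l v / η) := by
  simp only [smoothedMax, map_add, add_div, Pi.add_def]

theorem smoothedMaxDeriv_apply {η : ℝ} (hη : η ≠ 0) (φ : ι → Module.Dual ℝ E) (x v : E) :
    smoothedMaxDeriv η φ x v = η * ∑ l, softmax (fun k => φ k x / η) l * (φ l v / η) := by
  simp only [smoothedMaxDeriv, LinearMap.sum_apply, LinearMap.smul_apply, smul_eq_mul,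
    Finset.mul_sum, mul_div_assoc', mul_div_cancel_left₀ _ hη]

variable [Nonempty ι] {η : ℝ}

theorem smoothedMax_add_smoothedMaxDeriv_le (hη : 0 < η) (φ : ι → Module.Dual ℝ E) (x v : E) :
    smoothedMax η φ x + smoothedMaxDeriv η φ x v ≤ smoothedMax η φ (x + v) := by
  rw [smoothedMax_add, smoothedMaxDeriv_apply hη.ne', smoothedMax, ← mul_add]
  gcongr
  exact logSumExp_add_sum_softmax_mul_le _ _

theorem smoothedMax_add_le (hη : 0 < η) {φ : ι → Module.Dual ℝ E} (x : E) {v : E} {D : ℝ}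
    (hv : ∀ l, |φ l v| ≤ D) :
    smoothedMax η φ (x + v) ≤
      smoothedMax η φ x + smoothedMaxDeriv η φ x v + D ^ 2 / (2 * η) := by
  have h_mem (l : ι) : φ l v / η ∈ Set.Icc (-(D / η)) (D / η) := by
    rw [Set.mem_Icc, ← abs_le, abs_div, abs_of_pos hη]
    gcongr
    exact hv l
  calc smoothedMax η φ (x + v)
      ≤ η * (logSumExp (fun l => φ l x / η) +
          (∑ l, softmax (fun k => φ k x / η) l * (φ l v / η) + (D / η - -(D / η)) ^ 2 / 8)) := by
        rw [smoothedMax_add]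
        gcongr
        exact logSumExp_add_le _ h_mem
    _ = smoothedMax η φ x + smoothedMaxDeriv η φ x v + D ^ 2 / (2 * η) := by
        rw [smoothedMaxDeriv_apply hη.ne', smoothedMax]
        field

theorem hasCurvatureBound_smoothedMax (hη : 0 < η) {φ : ι → Module.Dual ℝ E} {K : Set E} {D : ℝ}
    (hK : ∀ x ∈ K, ∀ s ∈ K, ∀ l, |φ l (s - x)| ≤ D) :
    HasCurvatureBound K (smoothedMax η φ) (smoothedMaxDeriv η φ) (D ^ 2 / η) := by
  intro x hx s hs γ hγ
  have h_step (l : ι) : |φ l (γ • (s - x))| ≤ γ * D := by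
    rw [map_smul, smul_eq_mul, abs_mul, abs_of_nonneg hγ.1]
    exact mul_le_mul_of_nonneg_left (hK x hx s hs l) hγ.1
  calc smoothedMax η φ ((1 - γ) • x + γ • s) = smoothedMax η φ (x + γ • (s - x)) := by
        congr 1
        module
    _ ≤ smoothedMax η φ x + smoothedMaxDeriv η φ x (γ • (s - x)) + (γ * D) ^ 2 / (2 * η) :=
        smoothedMax_add_le hη x h_step
    _ = smoothedMax η φ x + γ * smoothedMaxDeriv η φ x (s - x) + γ ^ 2 * (D ^ 2 / η) / 2 := by
        rw [map_smul, smul_eq_mul]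
        field

end SmoothedMax

section Frobenius

variable {ι κ : Type*} [Fintype ι] [Fintype κ]

/-- The functional `⟨·, A⟩` that a matrix `A` defines through the Frobenius inner product. -/
def frobeniusDual : (ι → κ → ℝ) →ₗ[ℝ] Module.Dual ℝ (ι → κ → ℝ) :=
  LinearMap.mk₂ ℝ (fun A P => ∑ i, ∑ j, P i j * A i j)
    (fun A B P => by simp [mul_add, Finset.sum_add_distrib])
    (fun c A P => by simp [mul_left_comm, Finset.mul_sum])
    (fun A P S => by simp [add_mul, Finset.sum_add_distrib])
    (fun c A P => by simp [mul_assoc, Finset.mul_sum])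

theorem frobeniusDual_apply (A P : ι → κ → ℝ) :
    frobeniusDual A P = ∑ i, ∑ j, P i j * A i j := rfl

theorem frobeniusDual_sum_mul {ν : Type*} [Fintype ν] (w : ν → ℝ) (C : ν → ι → κ → ℝ) :
    frobeniusDual (fun i j => ∑ l, w l * C l i j) = ∑ l, w l • frobeniusDual (C l) := by
  have matrix_eq : (fun i j => ∑ l, w l * C l i j) = ∑ l, w l • C l := by
    ext i j
    simp only [Finset.sum_apply, Pi.smul_apply, smul_eq_mul]
  simp only [matrix_eq, map_sum, map_smul]

theorem abs_frobeniusDual_le {ν : Type*} [Fintype ν] {C : ν → ι → κ → ℝ}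
    {Φ : EuclideanSpace ℝ ν →L[ℝ] EuclideanSpace ℝ (ι × κ)}
    (hΦ : ∀ (α : EuclideanSpace ℝ ν) (q : ι × κ), Φ α q = ∑ l, α l * C l q.1 q.2)
    (l : ν) (P : ι → κ → ℝ) :
    |frobeniusDual (C l) P| ≤ ‖Φ‖ * √(∑ i, ∑ j, P i j ^ 2) := by
  classical
  let e : EuclideanSpace ℝ ν := EuclideanSpace.single l 1
  let p : EuclideanSpace ℝ (ι × κ) := WithLp.toLp 2 fun q => P q.1 q.2
  have inner_eq : inner ℝ (Φ e) p = frobeniusDual (C l) P := by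
    simp [PiLp.inner_apply, hΦ, e, p, frobeniusDual_apply, Fintype.sum_prod_type]
  have norm_p : ‖p‖ = √(∑ i, ∑ j, P i j ^ 2) := by
    simp [EuclideanSpace.norm_eq, p, Fintype.sum_prod_type]
  have norm_column_le : ‖Φ e‖ ≤ ‖Φ‖ := by simpa [e] using Φ.le_opNorm e
  calc |frobeniusDual (C l) P| ≤ ‖Φ e‖ * ‖p‖ := inner_eq ▸ abs_real_inner_le_norm _ _
    _ ≤ ‖Φ‖ * √(∑ i, ∑ j, P i j ^ 2) := by
        rw [norm_p]
        gcongr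

end Frobenius

section TransportPolytope

variable {n m : ℕ} {a : Fin n → ℝ} {b : Fin m → ℝ}

theorem convex_transportPolytope (a : Fin n → ℝ) (b : Fin m → ℝ) :
    Convex ℝ (transportPolytope a b) := by
  rintro P ⟨hP, hPa, hPb⟩ S ⟨hS, hSa, hSb⟩ x y hx hy hxy
  refine ⟨fun i j => add_nonneg (mul_nonneg hx (hP i j)) (mul_nonneg hy (hS i j)),
    fun i => ?_, fun j => ?_⟩
  · simp [Finset.sum_add_distrib, ← Finset.mul_sum, hPa, hSa, ← add_mul, hxy]
  · simp [Finset.sum_add_distrib, ← Finset.mul_sum, hPb, hSb, ← add_mul, hxy]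

theorem sum_sq_le_of_mem_transportPolytope {P : Fin n → Fin m → ℝ}
    (hP : P ∈ transportPolytope a b) : ∑ i, ∑ j, P i j ^ 2 ≤ (∑ i, a i) ^ 2 := by
  simp only [← hP.2.1, ← Fintype.sum_prod_type']
  exact Finset.sum_sq_le_sq_sum_of_nonneg fun q _ => hP.1 q.1 q.2

theorem sum_sq_sub_le_of_mem_transportPolytope {P S : Fin n → Fin m → ℝ}
    (hP : P ∈ transportPolytope a b) (hS : S ∈ transportPolytope a b) :
    ∑ i, ∑ j, (S - P) i j ^ 2 ≤ 2 * (∑ i, a i) ^ 2 := by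
  calc ∑ i, ∑ j, (S - P) i j ^ 2 ≤ ∑ i, ∑ j, (S i j ^ 2 + P i j ^ 2) := by
        gcongr with i _ j _
        simp only [Pi.sub_apply]
        nlinarith [mul_nonneg (hS.1 i j) (hP.1 i j)]
    _ = ∑ i, ∑ j, S i j ^ 2 + ∑ i, ∑ j, P i j ^ 2 := by simp only [Finset.sum_add_distrib]
    _ ≤ 2 * (∑ i, a i) ^ 2 := by
        linarith [sum_sq_le_of_mem_transportPolytope hS, sum_sq_le_of_mem_transportPolytope hP]

theorem hasCurvatureBound_smoothedMax_transportPolytope {ν : Type*} [Fintype ν] [Nonempty ν]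
    {η : ℝ} (hη : 0 < η) {C : ν → Fin n → Fin m → ℝ}
    {Φ : EuclideanSpace ℝ ν →L[ℝ] EuclideanSpace ℝ (Fin n × Fin m)}
    (hΦ : ∀ (α : EuclideanSpace ℝ ν) (q : Fin n × Fin m), Φ α q = ∑ l, α l * C l q.1 q.2) :
    HasCurvatureBound (transportPolytope a b) (smoothedMax η fun l => frobeniusDual (C l))
      (smoothedMaxDeriv η fun l => frobeniusDual (C l)) (2 * (∑ i, a i) ^ 2 * ‖Φ‖ ^ 2 / η) := by
  have h_width : ∀ P ∈ transportPolytope a b, ∀ S ∈ transportPolytope a b, ∀ l,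
      |frobeniusDual (C l) (S - P)| ≤ ‖Φ‖ * √(2 * (∑ i, a i) ^ 2) := fun P hP S hS l =>
    (abs_frobeniusDual_le hΦ l _).trans (by
      gcongr
      exact sum_sq_sub_le_of_mem_transportPolytope hP hS)
  convert hasCurvatureBound_smoothedMax hη h_width using 2
  rw [mul_pow, Real.sq_sqrt (by positivity), mul_comm]

end TransportPolytope

/-- convergence of the Frank–Wolfe algorithm for the smoothed FROT
objective `G_η(Π) = η log(∑_ℓ exp(⟨Π, C_ℓ⟩/η))`: if the linear subproblems are solved
to accuracy `δ γ_t Q / 2` with `Q = 2‖Φ‖_op²/η` and step sizes `γ_t = 2/(t+2)`, then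
`G_η(Π⁽ᵗ⁾) − G_η(Π*) ≤ (4‖Φ‖_op²/(η(t+2)))(1+δ)` for all `t ≥ 1` and `Π* ∈ U(a,b)`. -/
theorem frot_frank_wolfe_convergence (n m L : ℕ) (hn : 1 ≤ n) (hm : 1 ≤ m) (hL : 1 ≤ L)
    (η δ : ℝ) (hη : 0 < η) (hδ : 0 ≤ δ)
    (C : Fin L → Fin n → Fin m → ℝ)
    (a : Fin n → ℝ) (b : Fin m → ℝ)
    (ha : (∀ i, 0 ≤ a i) ∧ ∑ i, a i = 1) (hb : (∀ j, 0 ≤ b j) ∧ ∑ j, b j = 1)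
    (Φ : EuclideanSpace ℝ (Fin L) →L[ℝ] EuclideanSpace ℝ (Fin n × Fin m))
    (hΦ : ∀ (α : EuclideanSpace ℝ (Fin L)) (q : Fin n × Fin m),
      Φ α q = ∑ ℓ, α ℓ * C ℓ q.1 q.2)
    (G : (Fin n → Fin m → ℝ) → ℝ)
    (hG : ∀ P : Fin n → Fin m → ℝ,
      G P = η * Real.log (∑ ℓ, Real.exp ((∑ i, ∑ j, P i j * C ℓ i j) / η)))
    (M : (Fin n → Fin m → ℝ) → Fin n → Fin m → ℝ)
    (hM : ∀ (P : Fin n → Fin m → ℝ) (i : Fin n) (j : Fin m),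
      M P i j = ∑ ℓ, (Real.exp ((∑ i', ∑ j', P i' j' * C ℓ i' j') / η) /
        ∑ ℓ' : Fin L, Real.exp ((∑ i', ∑ j', P i' j' * C ℓ' i' j') / η)) * C ℓ i j)
    (Pseq Phat : ℕ → Fin n → Fin m → ℝ)
    (hP0 : Pseq 0 ∈ transportPolytope a b)
    (hhat : ∀ t : ℕ, Phat t ∈ transportPolytope a b ∧
      ∀ S ∈ transportPolytope a b,
        ∑ i, ∑ j, Phat t i j * M (Pseq t) i j ≤
          (∑ i, ∑ j, S i j * M (Pseq t) i j) +
            δ * (2 / ((t : ℝ) + 2)) * (2 * ‖Φ‖ ^ 2 / η) / 2)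
    (hstep : ∀ t : ℕ, Pseq (t + 1) = fun i j =>
      (1 - 2 / ((t : ℝ) + 2)) * Pseq t i j + (2 / ((t : ℝ) + 2)) * Phat t i j) :
    ∀ t : ℕ, 1 ≤ t → ∀ Pstar ∈ transportPolytope a b,
      G (Pseq t) - G Pstar ≤ 4 * ‖Φ‖ ^ 2 / (η * ((t : ℝ) + 2)) * (1 + δ) := by
  have : Nonempty (Fin L) := ⟨⟨0, hL⟩⟩
  let φ (ℓ : Fin L) := frobeniusDual (C ℓ)
  have hGφ : G = smoothedMax η φ := funext hG
  have hMφ (P) : frobeniusDual (M P) = smoothedMaxDeriv η φ P := by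
    rw [smoothedMaxDeriv, ← frobeniusDual_sum_mul]
    exact congrArg _ (funext₂ (hM P))
  have hcurv : HasCurvatureBound (transportPolytope a b) (smoothedMax η φ) (smoothedMaxDeriv η φ)
      (2 * ‖Φ‖ ^ 2 / η) := by
    simpa only [ha.2, one_pow, mul_one] using
      hasCurvatureBound_smoothedMax_transportPolytope (a := a) hη hΦ
  have hconv (P S) : smoothedMax η φ P + smoothedMaxDeriv η φ P (S - P) ≤ smoothedMax η φ S := by
    simpa using smoothedMax_add_smoothedMaxDeriv_le hη φ P (S - P)
  have hseq : IsFrankWolfeSequence (transportPolytope a b) (smoothedMaxDeriv η φ)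
      (2 * ‖Φ‖ ^ 2 / η) δ Pseq Phat :=
    ⟨hP0, fun t => (hhat t).1, fun t S hS => hMφ (Pseq t) ▸ (hhat t).2 S hS, hstep⟩
  intro t ht Pstar hPstar
  rw [hGφ]
  convert hseq.sub_le (convex_transportPolytope a b) (fun P _ S _ => hconv P S) hcurv hPstar ht
    using 2
  field
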